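/- For an IALM sequence with errors and penalty parameters satisfying (A1)–(A5), if the value function ν is subdifferentiable at s̄ (i.e. there exists λ̄ ∈ Y with ν(s) ≥ ν(s̄) + ⟨λ̄, s − s̄⟩ for all s ∈ Y), then the algorithm quantitatively converges to the closest feasible problem: f(x^k) → ν(s̄) with |f(x^k) − ν(s̄)| = O(1/√(∑_{i=0}^{k−1} γ_i)); C(x^k) − y^k → s̄ with ‖C(x^k) − y^k − s̄‖ = O(1/√(∑_{i=0}^{k−1} γ_i)); and ‖y^k − Proj_K(C(x^k))‖ = O(1/√(∑_{i=0}^{k−1} γ_i)). -/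

import Mathlib

open scoped RealInnerProductSpace
open Filter Asymptotics

noncomputable section

/-- The negative dual function `h(l) = sup_{(x,s) ∈ 𝒞} (⟪l, s⟫ − f x)`. -/
def negDual {E Y : Type*} [NormedAddCommGroup Y] [InnerProductSpace ℝ Y]
    (f : E → EReal) (CC : Set (E × Y)) (l : Y) : EReal :=
  ⨆ (p : E × Y) (_ : p ∈ CC), ((⟪l, p.2⟫ : ℝ) : EReal) - f p.1

/-- The value function of the shifted problem: `ν(s̃) = inf { f x | (x, s̃) ∈ 𝒞 }`. -/
def valueFn {E Y : Type*} (f : E → EReal) (CC : Set (E × Y)) (st : Y) : EReal :=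
  ⨅ (x : E) (_ : (x, st) ∈ CC), f x

lemma aux_small {A B : ℝ} (h : ∀ t : ℝ, 0 < t → t ≤ 1 → 0 ≤ A + t * B) : 0 ≤ A := by
  by_contra hA
  push Not at hA
  have hB : 0 < |B| + 1 := by positivity
  set t := min 1 (-A / 2 / (|B| + 1)) with ht
  have h0 : 0 < t := lt_min one_pos (by apply div_pos _ hB; linarith)
  have h1 := h t h0 (min_le_left _ _)
  have h2 : t * (|B| + 1) ≤ -A / 2 := by
    rw [← le_div_iff₀ hB]; exact min_le_right _ _
  have h3 : t * B ≤ t * (|B| + 1) :=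
    mul_le_mul_of_nonneg_left (by linarith [le_abs_self B]) h0.le
  linarith

lemma aux_sum {u c : ℕ → ℝ} (hc : ∀ k, 0 ≤ c k) (hs : Summable c)
    (h : ∀ k, u (k+1) ≤ u k + c k) (k : ℕ) : u k ≤ u 0 + ∑' i, c i := by
  have h1 : ∀ k, u k ≤ u 0 + ∑ i ∈ Finset.range k, c i := by
    intro k
    induction k with
    | zero => simp
    | succ n ih => rw [Finset.sum_range_succ]; linarith [h n]
  have := hs.sum_le_tsum (Finset.range k) (fun i _ => hc i)
  linarith [h1 k]

lemma aux_prox {Y : Type*} [NormedAddCommGroup Y] [InnerProductSpace ℝ Y] [CompleteSpace Y]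
    (G : Set (Y × ℝ)) (hGne : G.Nonempty) (hGcl : IsClosed G) (hGcv : Convex ℝ G)
    (c : ℝ) (b : Y) (hlb : ∀ p ∈ G, c + ⟪b, p.1⟫ ≤ p.2)
    (l : Y) (g : ℝ) (hg : 0 < g) :
    ∃ q ∈ G, ∀ p ∈ G, q.2 + ⟪l - g • q.1, p.1 - q.1⟫ ≤ p.2 := by
  set L : Y × ℝ → ℝ := fun p => p.2 - ⟪l, p.1⟫ + g / 2 * ‖p.1‖ ^ 2 with hL
  have hmid : ∀ p q : Y × ℝ, L ((1/2 : ℝ) • p + (1/2 : ℝ) • q)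
      = (L p + L q) / 2 - g / 8 * ‖p.1 - q.1‖ ^ 2 := by
    intro p q
    simp only [hL, Prod.fst_add, Prod.snd_add, Prod.smul_fst, Prod.smul_snd, inner_add_right,
      inner_smul_right, smul_eq_mul]
    rw [norm_add_sq_real, norm_sub_sq_real, norm_smul, norm_smul, inner_smul_left, inner_smul_right]
    simp
    ring
  have hbd : BddBelow (L '' G) := by
    refine ⟨c - ‖b - l‖ ^ 2 / (2 * g), ?_⟩
    rintro _ ⟨p, hp, rfl⟩
    have h1 := hlb p hp
    have h2 : -(‖b - l‖ * ‖p.1‖) ≤ ⟪b - l, p.1⟫ :=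
      neg_le_of_abs_le (abs_real_inner_le_norm _ _)
    rw [inner_sub_left] at h2
    have h3 : ‖b - l‖ * ‖p.1‖ ≤ ‖b - l‖ ^ 2 / (2 * g) + g / 2 * ‖p.1‖ ^ 2 := by
      have : ‖b - l‖ ^ 2 / (2 * g) + g / 2 * ‖p.1‖ ^ 2 - ‖b - l‖ * ‖p.1‖
          = (‖b - l‖ - g * ‖p.1‖) ^ 2 / (2 * g) := by field_simp; ring
      have h4 : 0 ≤ (‖b - l‖ - g * ‖p.1‖) ^ 2 / (2 * g) := by positivity
      linarith
    simp only [hL]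
    linarith
  set m := sInf (L '' G) with hm
  have hmle : ∀ p ∈ G, m ≤ L p := fun p hp => csInf_le hbd ⟨p, hp, rfl⟩
  have hex : ∀ n : ℕ, ∃ p ∈ G, L p < m + 1 / ((n : ℝ) + 1) := by
    intro n
    obtain ⟨_, ⟨p, hp, rfl⟩, h⟩ := exists_lt_of_csInf_lt (hGne.image L)
      (show sInf (L '' G) < m + 1 / ((n : ℝ) + 1) by
        have : 0 < 1 / ((n : ℝ) + 1) := by positivity
        linarith)
    exact ⟨p, hp, h⟩
  choose p hpG hpL using hex
  have hcau : CauchySeq (fun n => (p n).1) := by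
    apply cauchySeq_of_le_tendsto_0 (fun N : ℕ => Real.sqrt (8 / g * (1 / ((N : ℝ) + 1))))
    · intro n k N hn hk
      rw [dist_eq_norm]
      apply Real.le_sqrt_of_sq_le
      have h1 := hmle _ (hGcv (hpG n) (hpG k) (by norm_num : (0:ℝ) ≤ 1/2)
        (by norm_num : (0:ℝ) ≤ 1/2) (by norm_num))
      rw [hmid] at h1
      have hn' : 1 / ((n : ℝ) + 1) ≤ 1 / ((N : ℝ) + 1) := by
        gcongr
      have hk' : 1 / ((k : ℝ) + 1) ≤ 1 / ((N : ℝ) + 1) := by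
        gcongr
      have h2 : g / 8 * ‖(p n).1 - (p k).1‖ ^ 2 ≤ 1 / ((N : ℝ) + 1) := by
        linarith [hpL n, hpL k]
      calc ‖(p n).1 - (p k).1‖ ^ 2 = 8 / g * (g / 8 * ‖(p n).1 - (p k).1‖ ^ 2) := by
            field_simp
        _ ≤ _ := by gcongr
    · have := (tendsto_one_div_add_atTop_nhds_zero_nat (𝕜 := ℝ)).const_mul (8 / g)
      have := (Real.continuous_sqrt.tendsto _).comp this
      simpa [Function.comp_def] using this
  obtain ⟨s, hs⟩ := cauchySeq_tendsto_of_complete hcau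
  have hLt : Tendsto (fun n => L (p n)) atTop (nhds m) := by
    refine tendsto_of_tendsto_of_tendsto_of_le_of_le tendsto_const_nhds ?_
      (fun n => hmle _ (hpG n)) (fun n => (hpL n).le)
    simpa using (tendsto_one_div_add_atTop_nhds_zero_nat (𝕜 := ℝ)).const_add m
  have hin : Tendsto (fun n => ⟪l, (p n).1⟫) atTop (nhds ⟪l, s⟫) :=
    (tendsto_const_nhds).inner hs
  have hnm : Tendsto (fun n => g / 2 * ‖(p n).1‖ ^ 2) atTop (nhds (g / 2 * ‖s‖ ^ 2)) :=
    ((hs.norm).pow 2).const_mul _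
  have hr : Tendsto (fun n => (p n).2) atTop (nhds (m + ⟪l, s⟫ - g / 2 * ‖s‖ ^ 2)) := by
    have := (hLt.add hin).sub hnm
    refine this.congr (fun n => ?_)
    simp only [hL]; ring
  set q : Y × ℝ := (s, m + ⟪l, s⟫ - g / 2 * ‖s‖ ^ 2) with hq
  have hqG : q ∈ G := hGcl.mem_of_tendsto (hs.prodMk_nhds hr) (Eventually.of_forall hpG)
  have hLq : L q = m := by simp only [hL, hq]; ring
  refine ⟨q, hqG, fun p hp => ?_⟩
  have key : 0 ≤ (p.2 - q.2 - ⟪l - g • q.1, p.1 - q.1⟫) := by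
    apply aux_small (B := g / 2 * ‖p.1 - q.1‖ ^ 2)
    intro t ht0 ht1
    have h1 := hmle _ (hGcv hqG hp (by linarith : 0 ≤ 1 - t) ht0.le (by ring))
    rw [← hLq] at h1
    have h2 : (1 - t) • q + t • p = (q.1 + t • (p.1 - q.1), q.2 + t * (p.2 - q.2)) := by
      ext
      · simp [sub_smul, smul_sub]; abel
      · simp; ring
    rw [h2] at h1
    simp only [hL] at h1
    rw [norm_add_sq_real, inner_add_right, inner_smul_right, inner_smul_right, norm_smul,
      Real.norm_of_nonneg ht0.le] at h1
    rw [inner_sub_left, inner_smul_left]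
    simp only [conj_trivial]
    have h3 : 0 ≤ t * (p.2 - q.2 - (⟪l, p.1 - q.1⟫ - g * ⟪q.1, p.1 - q.1⟫)
        + t * (g / 2 * ‖p.1 - q.1‖ ^ 2)) := by nlinarith
    exact nonneg_of_mul_nonneg_right h3 ht0
  linarith

set_option maxHeartbeats 4000000 in
lemma aux_main {Y : Type*} [NormedAddCommGroup Y] [InnerProductSpace ℝ Y] [CompleteSpace Y]
    (G : Set (Y × ℝ)) (hGcl : IsClosed G) (hGcv : Convex ℝ G)
    (sbar lbar : Y) (v0 : ℝ) (hbarG : (sbar, v0) ∈ G)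
    (hlb : ∀ p ∈ G, v0 + ⟪lbar, p.1 - sbar⟫ ≤ p.2)
    (hproj : ∀ p ∈ G, 0 ≤ ⟪sbar, p.1 - sbar⟫)
    (γ : ℕ → ℝ) (hγ : ∀ k : ℕ, 0 < γ k) (ε : ℕ → ℝ) (hε : ∀ k : ℕ, 0 ≤ ε k)
    (fs : ℕ → ℝ) (ss lam : ℕ → Y)
    (hmem : ∀ k, (ss (k+1), fs (k+1)) ∈ G)
    (hopt : ∀ k, ∀ p ∈ G, fs (k+1) - ⟪lam k, ss (k+1)⟫ + γ k / 2 * ‖ss (k+1)‖ ^ 2 ≤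
      p.2 - ⟪lam k, p.1⟫ + γ k / 2 * ‖p.1‖ ^ 2 + ε (k+1) ^ 2 / (2 * γ k))
    (hlam : ∀ k : ℕ, lam (k+1) = lam k - γ k • ss (k+1))
    (A1 : Summable ε)
    (A2 : (fun k : ℕ => ε (k+1) / γ k * ∑ i ∈ Finset.range (k+1), γ i)
        =O[atTop] fun k : ℕ => 1 / Real.sqrt (∑ i ∈ Finset.range (k+1), γ i))
    (A3 : Summable fun k : ℕ => (ε (k+1) / γ (k+1)) ^ 2 * ∑ i ∈ Finset.range (k+1), γ i)
    (A5 : Tendsto (fun n : ℕ => ∑ i ∈ Finset.range n, γ i) atTop atTop) :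
    ∃ M : ℝ, 0 ≤ M ∧ ∀ᶠ k : ℕ in atTop,
      ‖ss (k+1)‖ ^ 2 - ‖sbar‖ ^ 2 ≤ M / (∑ i ∈ Finset.range (k+1), γ i) ∧
      |fs (k+1) - v0| ≤ M / Real.sqrt (∑ i ∈ Finset.range (k+1), γ i) := by
  have hprox : ∀ k, ∃ q ∈ G, ∀ p ∈ G, q.2 + ⟪lam k - γ k • q.1, p.1 - q.1⟫ ≤ p.2 := fun k =>
    aux_prox G ⟨_, hbarG⟩ hGcl hGcv (v0 - ⟪lbar, sbar⟫) lbar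
      (fun p hp => by have := hlb p hp; rw [inner_sub_right] at this; linarith) (lam k) (γ k) (hγ k)
  choose z hzG hz using hprox
  set S : ℕ → ℝ := fun k => ∑ i ∈ Finset.range k, γ i with hS
  have hSsucc : ∀ k, S (k+1) = S k + γ k := fun k => Finset.sum_range_succ _ _
  have hSnn : ∀ k, 0 ≤ S k := fun k => Finset.sum_nonneg (fun i _ => (hγ i).le)
  have hSpos : ∀ k, 0 < S (k+1) := fun k => by rw [hSsucc]; linarith [hSnn k, hγ k]
  -- closeness
  have hclose : ∀ k, ‖ss (k+1) - (z k).1‖ ≤ ε (k+1) / γ k := by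
    intro k
    have h1 := hopt k _ (hzG k)
    have h2 := hz k _ (hmem k)
    have hg := hγ k
    have h3 : γ k / 2 * ‖ss (k+1) - (z k).1‖ ^ 2 ≤ ε (k+1) ^ 2 / (2 * γ k) := by
      rw [norm_sub_sq_real]
      simp only [inner_sub_left, inner_sub_right, inner_smul_left, conj_trivial,
        real_inner_self_eq_norm_sq] at h2
      rw [real_inner_comm (z k).1 (ss (k+1))] at *
      nlinarith
    apply le_of_sq_le_sq _ (div_nonneg (hε _) hg.le)
    rw [div_pow]
    rw [le_div_iff₀ (by positivity)] at h3 ⊢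
    nlinarith
  -- norm gaps
  have hgap : ∀ p ∈ G, ‖p.1 - sbar‖ ^ 2 ≤ ‖p.1‖ ^ 2 - ‖sbar‖ ^ 2 := by
    intro p hp
    have h1 := hproj p hp
    rw [norm_sub_sq_real]
    rw [inner_sub_right, real_inner_self_eq_norm_sq, real_inner_comm] at h1
    linarith
  have hlamz : ∀ k, ‖lam (k+1) - (lam k - γ k • (z k).1)‖ ≤ ε (k+1) := by
    intro k
    have : lam (k+1) - (lam k - γ k • (z k).1) = -(γ k • (ss (k+1) - (z k).1)) := by
      rw [hlam, smul_sub]; abel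
    rw [this, norm_neg, norm_smul, Real.norm_of_nonneg (hγ k).le]
    calc γ k * _ ≤ γ k * (ε (k+1) / γ k) := mul_le_mul_of_nonneg_left (hclose k) (hγ k).le
      _ = _ := by have := (hγ k).ne'; field_simp
  -- boundedness of shifted multipliers
  set w : ℕ → Y := fun k => lam k - lbar + S k • sbar with hw
  have hwz : ∀ k, ‖w k - γ k • ((z k).1 - sbar)‖ ≤ ‖w k‖ := by
    intro k
    have h1 := hz k _ hbarG
    have h2 := hlb _ (hzG k)
    have h3 := hproj _ (hzG k)
    have h4 : 0 ≤ ⟪w k - γ k • ((z k).1 - sbar), (z k).1 - sbar⟫ := by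
      have e : w k - γ k • ((z k).1 - sbar)
          = (lam k - γ k • (z k).1) - lbar + S (k+1) • sbar := by
        simp only [hw, hSsucc, smul_sub, add_smul]; abel
      rw [e, inner_add_left, inner_sub_left, inner_smul_left]
      have e2 : ⟪lam k - γ k • (z k).1, (sbar, v0).1 - (z k).1⟫
          = - ⟪lam k - γ k • (z k).1, (z k).1 - sbar⟫ := by
        rw [← inner_neg_right]; simp
      rw [e2] at h1
      have h5 := mul_nonneg (hSnn (k+1)) h3
      simp only [conj_trivial]
      linarith
    have hg := hγ k
    apply le_of_sq_le_sq _ (norm_nonneg _)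
    rw [inner_sub_left, inner_smul_left, real_inner_self_eq_norm_sq] at h4
    simp only [conj_trivial] at h4
    rw [norm_sub_sq_real, inner_smul_right, norm_smul, Real.norm_of_nonneg hg.le]
    nlinarith [mul_nonneg hg.le h4, sq_nonneg (γ k * ‖(z k).1 - sbar‖)]
  have hwstep : ∀ k, ‖w (k+1)‖ ≤ ‖w k‖ + ε (k+1) := by
    intro k
    have e : w (k+1) = (w k - γ k • ((z k).1 - sbar))
        + (lam (k+1) - (lam k - γ k • (z k).1)) := by
      simp only [hw, hSsucc, smul_sub, add_smul]; abel
    rw [e]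
    exact (norm_add_le _ _).trans (add_le_add (hwz k) (hlamz k))
  have A1' : Summable (fun k => ε (k+1)) := (summable_nat_add_iff 1).2 A1
  set D := ‖w 0‖ + ∑' i, ε (i+1) with hD
  have hwD : ∀ k, ‖w k‖ ≤ D := aux_sum (u := fun k => ‖w k‖) (fun k => hε (k+1)) A1' hwstep
  have hD0 : 0 ≤ D := (norm_nonneg _).trans (hwD 0)
  -- gap recursion
  set a : ℕ → ℝ := fun k => ‖(z k).1‖ ^ 2 - ‖sbar‖ ^ 2 with ha
  have ha0 : ∀ k, 0 ≤ a k := fun k => (sq_nonneg _).trans (hgap _ (hzG k))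
  have hinner : ∀ k (x : Y), ⟪lam (k+1) - (lam k - γ k • (z k).1), x⟫ ≤ ε (k+1) * ‖x‖ := fun k x =>
    (real_inner_le_norm _ _).trans (mul_le_mul_of_nonneg_right (hlamz k) (norm_nonneg _))
  have hastep : ∀ k, a (k+1) ≤ a k + (ε (k+1) / γ (k+1)) ^ 2 := by
    intro k
    have h1 := hz k _ (hzG (k+1))
    have h2 := hz (k+1) _ (hzG k)
    have h3 := hinner k ((z (k+1)).1 - (z k).1)
    have e : ⟪lam (k+1) - γ (k+1) • (z (k+1)).1, (z k).1 - (z (k+1)).1⟫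
        = - ⟪lam (k+1) - γ (k+1) • (z (k+1)).1, (z (k+1)).1 - (z k).1⟫ := by
      rw [← inner_neg_right]; simp
    rw [e, inner_sub_left, inner_smul_left] at h2
    rw [inner_sub_left] at h3
    simp only [conj_trivial] at h2
    have hg := hγ (k+1)
    have h4 : γ (k+1) * ⟪(z (k+1)).1, (z (k+1)).1 - (z k).1⟫
        ≤ ε (k+1) * ‖(z (k+1)).1 - (z k).1‖ := by linarith
    have h5 : ⟪(z (k+1)).1, (z (k+1)).1 - (z k).1⟫
        ≤ ε (k+1) / γ (k+1) * ‖(z (k+1)).1 - (z k).1‖ := by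
      rw [div_mul_eq_mul_div, le_div_iff₀ hg]; linarith
    have h6 : 2 * ⟪(z (k+1)).1, (z (k+1)).1 - (z k).1⟫
        = ‖(z (k+1)).1‖ ^ 2 - ‖(z k).1‖ ^ 2 + ‖(z (k+1)).1 - (z k).1‖ ^ 2 := by
      rw [norm_sub_sq_real, inner_sub_right, real_inner_self_eq_norm_sq]; ring
    simp only [ha]
    nlinarith [sq_nonneg (ε (k+1) / γ (k+1) - ‖(z (k+1)).1 - (z k).1‖)]
  have hS1 : ∀ k, γ 0 ≤ S (k+1) := fun k =>
    Finset.single_le_sum (f := γ) (fun i _ => (hγ i).le) (by simp)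
  have A3' : Summable (fun k => (ε (k+1) / γ (k+1)) ^ 2) := by
    refine Summable.of_nonneg_of_le (fun k => sq_nonneg _) (fun k => ?_) (A3.mul_right (1 / γ 0))
    have h1 := mul_le_mul_of_nonneg_left (hS1 k) (sq_nonneg (ε (k+1) / γ (k+1)))
    rw [mul_one_div, le_div_iff₀ (hγ 0)]
    exact h1
  have haB := aux_sum (fun k => sq_nonneg (ε (k+1) / γ (k+1))) A3' hastep
  set R := Real.sqrt (a 0 + ∑' i, (ε (i+1) / γ (i+1)) ^ 2 + ‖sbar‖ ^ 2) with hR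
  have hzR : ∀ k, ‖(z k).1‖ ≤ R := by
    intro k
    apply Real.le_sqrt_of_sq_le
    have := haB k
    simp only [ha] at this ⊢
    linarith
  have hR0 : 0 ≤ R := Real.sqrt_nonneg _
  -- Lyapunov function
  set H : ℕ → ℝ := fun k => ⟪lam k - γ k • (z k).1, (z k).1⟫ - (z k).2 + S (k+1) * ‖sbar‖ ^ 2 with hH
  have hHstep : ∀ k, γ (k+1) * a (k+1) ≤ H k - H (k+1) + ε (k+1) * R := by
    intro k
    have h1 := hz k _ (hzG (k+1))
    have h3 := hinner k (z (k+1)).1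
    have h4 : ε (k+1) * ‖(z (k+1)).1‖ ≤ ε (k+1) * R :=
      mul_le_mul_of_nonneg_left (hzR _) (hε _)
    simp only [hH, ha, hSsucc (k+1)]
    simp only [inner_sub_left, inner_sub_right, inner_smul_left, conj_trivial,
      real_inner_self_eq_norm_sq] at h1 h3 ⊢
    linarith
  have hTstep : ∀ k, (S (k+2) * a (k+1) + H (k+1)) ≤ (S (k+1) * a k + H k)
      + ((ε (k+1) / γ (k+1)) ^ 2 * S (k+1) + ε (k+1) * R) := by
    intro k
    have h1 := mul_le_mul_of_nonneg_left (hastep k) (hSnn (k+1))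
    have h2 := hHstep k
    rw [hSsucc (k+1)]
    linarith
  have hTB := aux_sum (u := fun k => S (k+1) * a k + H k)
    (fun k => add_nonneg (mul_nonneg (sq_nonneg _) (hSnn _)) (mul_nonneg (hε _) hR0))
    (A3.add (A1'.mul_right R)) hTstep
  set T := S (0+1) * a 0 + H 0 + ∑' i, ((ε (i+1) / γ (i+1)) ^ 2 * S (i+1) + ε (i+1) * R) with hT
  have hHlow : ∀ k, -(D * ‖sbar‖ + |⟪lbar, sbar⟫| + |v0|) ≤ H k := by
    intro k
    have h1 := hz k _ hbarG
    have e : lam k - γ k • (z k).1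
        = (w k - γ k • ((z k).1 - sbar)) + lbar - S (k+1) • sbar := by
      simp only [hw, hSsucc, smul_sub, add_smul]; abel
    have h2 : ⟪lam k - γ k • (z k).1, sbar⟫ = ⟪w k - γ k • ((z k).1 - sbar), sbar⟫
        + ⟪lbar, sbar⟫ - S (k+1) * ‖sbar‖ ^ 2 := by
      rw [e, inner_sub_left, inner_add_left, inner_smul_left, real_inner_self_eq_norm_sq]
      simp
    have h3 : -(‖w k - γ k • ((z k).1 - sbar)‖ * ‖sbar‖) ≤ ⟪w k - γ k • ((z k).1 - sbar), sbar⟫ :=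
      neg_le_of_abs_le (abs_real_inner_le_norm _ _)
    have h4 : ‖w k - γ k • ((z k).1 - sbar)‖ * ‖sbar‖ ≤ D * ‖sbar‖ :=
      mul_le_mul_of_nonneg_right ((hwz k).trans (hwD k)) (norm_nonneg _)
    rw [inner_sub_right] at h1
    simp only [hH]
    simp only at h1
    linarith [neg_abs_le ⟪lbar, sbar⟫, le_abs_self v0]
  set T' := T + (D * ‖sbar‖ + |⟪lbar, sbar⟫| + |v0|) with hT'
  have haS : ∀ k, a k ≤ T' / S (k+1) := by
    intro k
    rw [le_div_iff₀ (hSpos k)]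
    have := hTB k
    have := hHlow k
    linarith
  have hT'0 : 0 ≤ T' := by
    have h1 := (ha0 0).trans (haS 0)
    by_contra h
    push Not at h
    exact absurd h1 (not_le.2 (div_neg_of_neg_of_pos h (hSpos 0)))
  -- use A2
  obtain ⟨c, hc0, hc⟩ := A2.exists_nonneg
  have hc' := hc.bound
  have hS1e : ∀ᶠ k in atTop, 1 ≤ S (k+1) :=
    ((tendsto_add_atTop_iff_nat 1).2 A5).eventually_ge_atTop 1
  set e0 := ∑' i, ε i with he0
  have he : ∀ k, ε k ≤ e0 := fun k => A1.le_tsum k (fun j _ => hε j)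
  set M1 := T' + c * (2 * R + c) with hM1
  have hM10 : 0 ≤ M1 := by positivity
  set M2 := ‖lbar‖ * Real.sqrt M1 + (D + ‖lbar‖) * Real.sqrt M1 + e0 * c with hM2
  have he00 : 0 ≤ e0 := (hε 0).trans (he 0)
  have hM20 : 0 ≤ M2 := by positivity
  refine ⟨M1 + M2, by positivity, ?_⟩
  filter_upwards [hc', hS1e] with k hk hk1
  have hSp := hSpos k
  have hg := hγ k
  have hsq1 : 1 ≤ Real.sqrt (S (k+1)) := Real.one_le_sqrt.2 hk1
  have hsqp : 0 < Real.sqrt (S (k+1)) := by linarith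
  have hρ0 : 0 ≤ ε (k+1) / γ k := div_nonneg (hε _) hg.le
  have hk2 : ε (k+1) / γ k * S (k+1) ≤ c * (1 / Real.sqrt (S (k+1))) := by
    have h1 := hk
    change ‖ε (k+1) / γ k * S (k+1)‖ ≤ c * ‖1 / Real.sqrt (S (k+1))‖ at h1
    rwa [Real.norm_of_nonneg (by positivity), Real.norm_of_nonneg (by positivity)] at h1
  have hρ : ε (k+1) / γ k ≤ c / S (k+1) := by
    rw [le_div_iff₀ hSp]
    refine hk2.trans ?_
    have : 1 / Real.sqrt (S (k+1)) ≤ 1 := by rw [div_le_one hsqp]; exact hsq1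
    nlinarith
  have hρc : ε (k+1) / γ k ≤ c := hρ.trans (div_le_self hc0 hk1)
  have hρs : ε (k+1) / γ k ≤ c / Real.sqrt (S (k+1)) := by
    refine hρ.trans (div_le_div_of_nonneg_left hc0 hsqp ?_)
    nlinarith [Real.mul_self_sqrt hSp.le]
  have hgap1 : ‖ss (k+1)‖ ^ 2 - ‖sbar‖ ^ 2 ≤ M1 / S (k+1) := by
    have h1 : ‖ss (k+1)‖ ≤ ‖(z k).1‖ + ε (k+1) / γ k := by
      have := norm_sub_norm_le (ss (k+1)) (z k).1
      linarith [hclose k]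
    have h2 : ‖ss (k+1)‖ ^ 2 ≤ (‖(z k).1‖ + ε (k+1) / γ k) ^ 2 :=
      pow_le_pow_left₀ (norm_nonneg _) h1 2
    have h3 : ε (k+1) / γ k * (2 * ‖(z k).1‖ + ε (k+1) / γ k) ≤ c / S (k+1) * (2 * R + c) := by
      have := hzR k
      gcongr
    have h4 := haS k
    simp only [ha] at h4
    have h5 : M1 / S (k+1) = T' / S (k+1) + c / S (k+1) * (2 * R + c) := by
      rw [hM1]; ring
    nlinarith
  have hu : ‖ss (k+1) - sbar‖ ≤ Real.sqrt M1 / Real.sqrt (S (k+1)) := by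
    rw [← Real.sqrt_div hM10]
    apply Real.le_sqrt_of_sq_le
    exact (hgap _ (hmem k)).trans hgap1
  have hM12 : M1 + M2 ≥ M2 := by linarith
  constructor
  · refine hgap1.trans ?_
    change _ ≤ (M1 + M2) / S (k+1)
    gcongr
    linarith
  · change _ ≤ (M1 + M2) / Real.sqrt (S (k+1))
    have hfin : M2 / Real.sqrt (S (k+1)) ≤ (M1 + M2) / Real.sqrt (S (k+1)) := by
      gcongr
    refine le_trans ?_ hfin
    have hM2e : M2 / Real.sqrt (S (k+1)) = ‖lbar‖ * (Real.sqrt M1 / Real.sqrt (S (k+1)))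
        + (D + ‖lbar‖) * (Real.sqrt M1 / Real.sqrt (S (k+1)))
        + e0 * (c / Real.sqrt (S (k+1))) := by rw [hM2]; ring
    have hn1 : 0 ≤ ‖lbar‖ * (Real.sqrt M1 / Real.sqrt (S (k+1))) := by positivity
    have hn2 : 0 ≤ (D + ‖lbar‖) * (Real.sqrt M1 / Real.sqrt (S (k+1))) := by positivity
    have hn3 : 0 ≤ e0 * (c / Real.sqrt (S (k+1))) := by positivity
    rw [hM2e, abs_le]
    constructor
    · have h1 := hlb _ (hmem k)
      have h2 : -(‖lbar‖ * ‖ss (k+1) - sbar‖) ≤ ⟪lbar, ss (k+1) - sbar⟫ :=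
        neg_le_of_abs_le (abs_real_inner_le_norm _ _)
      have h3 := mul_le_mul_of_nonneg_left hu (norm_nonneg lbar)
      simp only at h1
      linarith
    · have h1 := hopt k _ hbarG
      have h2 := hgap _ (hmem k)
      have h3 := hproj _ (hmem k)
      have h4 : lam k = w k + lbar - S k • sbar := by simp only [hw]; abel
      have h5 : ⟪lam k, ss (k+1) - sbar⟫ ≤ (D + ‖lbar‖) * ‖ss (k+1) - sbar‖ := by
        rw [h4, inner_sub_left, inner_smul_left]
        have h6 : ⟪w k + lbar, ss (k+1) - sbar⟫ ≤ (D + ‖lbar‖) * ‖ss (k+1) - sbar‖ := by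
          refine (real_inner_le_norm _ _).trans (mul_le_mul_of_nonneg_right ?_ (norm_nonneg _))
          exact (norm_add_le _ _).trans (by linarith [hwD k])
        have h7 := mul_nonneg (hSnn k) h3
        simp only [conj_trivial]
        simp only at h7
        linarith
      have h6 := mul_le_mul_of_nonneg_left hu (by positivity : 0 ≤ D + ‖lbar‖)
      have h7 : ε (k+1) ^ 2 / (2 * γ k) ≤ e0 * (c / Real.sqrt (S (k+1))) := by
        have e : ε (k+1) ^ 2 / (2 * γ k) = ε (k+1) / 2 * (ε (k+1) / γ k) := by ring
        rw [e]
        have := he (k+1)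
        have := hε (k+1)
        apply mul_le_mul _ hρs hρ0 he00
        linarith
      have h8 : 0 ≤ γ k / 2 * (‖ss (k+1)‖ ^ 2 - ‖sbar‖ ^ 2) :=
        mul_nonneg (by linarith) ((sq_nonneg _).trans h2)
      rw [inner_sub_right] at h5
      simp only at h1
      linarith

lemma aux_ereal {F F' I : EReal} {a b a' b' e r : ℝ} (hF : F ≠ ⊥)
    (h1 : F - (a : EReal) + (b : EReal) ≤ I + (e : EReal))
    (h2 : I ≤ F' - (a' : EReal) + (b' : EReal)) (h3 : F' ≤ (r : EReal)) :
    F ≠ ⊤ ∧ F.toReal - a + b ≤ r - a' + b' + e := by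
  have h4 : F - (a : EReal) + (b : EReal) ≤ ((r - a' + b' + e : ℝ) : EReal) := by
    refine h1.trans ?_
    push_cast
    gcongr
    refine h2.trans ?_
    gcongr
    exact EReal.sub_le_sub h3 le_rfl
  induction F with
  | bot => exact absurd rfl hF
  | top =>
    exfalso
    rw [EReal.top_sub_coe, EReal.top_add_coe] at h4
    exact absurd h4 (not_le.2 (EReal.coe_lt_top _))
  | coe x =>
    refine ⟨EReal.coe_ne_top _, ?_⟩
    simp only [EReal.toReal_coe]
    exact_mod_cast h4

theorem statement17
    {E Y : Type*}
    [NormedAddCommGroup E] [InnerProductSpace ℝ E] [CompleteSpace E]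
    [NormedAddCommGroup Y] [InnerProductSpace ℝ Y] [CompleteSpace Y]
    (X : Set E) (hXne : X.Nonempty) (hXcl : IsClosed X) (hXcv : Convex ℝ X)
    (K : Set Y) (hKne : K.Nonempty) (hKcl : IsClosed K) (hKcv : Convex ℝ K)
    (f : E → EReal)
    (hf_bot : ∀ x : E, f x ≠ ⊥) (hf_top : ∃ x ∈ X, f x ≠ ⊤)
    (hf_dom : ∀ x : E, x ∉ X → f x = ⊤)
    (hf_lsc : LowerSemicontinuous f)
    (hf_cvx : ∀ x y : E, ∀ a b : ℝ, 0 ≤ a → 0 ≤ b → a + b = 1 →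
      f (a • x + b • y) ≤ (a : EReal) * f x + (b : EReal) * f y)
    (C : E → Y) (CC : Set (E × Y))
    (hCC : ∀ (x : E) (sv : Y), (x, sv) ∈ CC ↔ x ∈ X ∧ ∃ yv ∈ K, sv = C x - yv)
    (hCCne : CC.Nonempty) (hCCcl : IsClosed CC) (hCCcv : Convex ℝ CC)
    (hnu_bot : ∀ sv : Y, valueFn f CC sv ≠ ⊥)
    (γ : ℕ → ℝ) (hγ : ∀ k : ℕ, 0 < γ k) (ε : ℕ → ℝ) (hε : ∀ k : ℕ, 0 ≤ ε k)
    (xs : ℕ → E) (ys : ℕ → Y) (ss : ℕ → Y) (lam : ℕ → Y)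
    (hxs : ∀ k : ℕ, xs (k+1) ∈ X) (hys : ∀ k : ℕ, ys (k+1) ∈ K)
    (hss : ∀ k : ℕ, ss (k+1) = C (xs (k+1)) - ys (k+1))
    (hopt : ∀ k : ℕ,
      f (xs (k+1)) - ((⟪lam k, ss (k+1)⟫ : ℝ) : EReal)
          + ((γ k / 2 * ‖ss (k+1)‖ ^ 2 : ℝ) : EReal)
        ≤ (⨅ (p : E × Y) (_ : p ∈ CC),
              f p.1 - ((⟪lam k, p.2⟫ : ℝ) : EReal)
                + ((γ k / 2 * ‖p.2‖ ^ 2 : ℝ) : EReal))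
          + ((ε (k+1) ^ 2 / (2 * γ k) : ℝ) : EReal))
    (hlam : ∀ k : ℕ, lam (k+1) = lam k - γ k • ss (k+1))
    (A1 : Summable ε)
    (A2 : (fun k : ℕ => ε (k+1) / γ k * ∑ i ∈ Finset.range (k+1), γ i)
        =O[atTop] fun k : ℕ => 1 / Real.sqrt (∑ i ∈ Finset.range (k+1), γ i))
    (A3 : Summable fun k : ℕ => (ε (k+1) / γ (k+1)) ^ 2 * ∑ i ∈ Finset.range (k+1), γ i)
    (A4 : Summable fun k : ℕ => ε (k+1) / γ (k+1) * ∑ i ∈ Finset.range (k+1), γ i)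
    (A5 : Tendsto (fun n : ℕ => ∑ i ∈ Finset.range n, γ i) atTop atTop)
    (sbar : Y)
    (hsbar_mem : sbar ∈ closure {sv : Y | ∃ x : E, (x, sv) ∈ CC})
    (hsbar_min : ∀ sv ∈ closure {sv : Y | ∃ x : E, (x, sv) ∈ CC}, ‖sbar‖ ≤ ‖sv‖)
    (projK : Y → Y)
    (hprojK : ∀ v : Y, projK v ∈ K ∧ ∀ w ∈ K, ‖v - projK v‖ ≤ ‖v - w‖)
    (hsub : ∃ lbar : Y, ∀ sv : Y,
      valueFn f CC sbar + ((⟪lbar, sv - sbar⟫ : ℝ) : EReal) ≤ valueFn f CC sv) :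
    Tendsto (fun k : ℕ => f (xs k)) atTop (nhds (valueFn f CC sbar)) ∧
    (∃ M : ℝ, ∀ᶠ k in atTop,
      f (xs k) ≤ valueFn f CC sbar
          + ((M / Real.sqrt (∑ i ∈ Finset.range k, γ i) : ℝ) : EReal) ∧
      valueFn f CC sbar ≤ f (xs k)
          + ((M / Real.sqrt (∑ i ∈ Finset.range k, γ i) : ℝ) : EReal)) ∧
    Tendsto (fun k : ℕ => C (xs k) - ys k) atTop (nhds sbar) ∧
    ((fun k : ℕ => ‖C (xs k) - ys k - sbar‖) =O[atTop]
        fun k : ℕ => 1 / Real.sqrt (∑ i ∈ Finset.range k, γ i)) ∧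
    ((fun k : ℕ => ‖ys k - projK (C (xs k))‖) =O[atTop]
        fun k : ℕ => 1 / Real.sqrt (∑ i ∈ Finset.range k, γ i)) := by
  obtain ⟨lbar, hlbar⟩ := hsub
  -- finiteness of the value at `sbar`
  obtain ⟨x0, hx0, hfx0⟩ := hf_top
  obtain ⟨y0, hy0⟩ := hKne
  have hx0C : (x0, C x0 - y0) ∈ CC := (hCC _ _).2 ⟨hx0, y0, hy0, rfl⟩
  have hval : ∀ (x : E) (s : Y), (x, s) ∈ CC → valueFn f CC s ≤ f x := fun x s h =>
    iInf₂_le (f := fun (x : E) (_ : (x, s) ∈ CC) => f x) x h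
  have hvt : valueFn f CC sbar ≠ ⊤ := by
    intro h
    have h1 := (hlbar (C x0 - y0)).trans (hval _ _ hx0C)
    rw [h, EReal.top_add_coe] at h1
    exact hfx0 (top_le_iff.1 h1)
  obtain ⟨v0, hv0⟩ : ∃ v0 : ℝ, valueFn f CC sbar = (v0 : EReal) :=
    ⟨_, (EReal.coe_toReal hvt (hnu_bot sbar)).symm⟩
  rw [hv0] at hlbar ⊢
  set G0 : Set (Y × ℝ) := {p | ∃ x, (x, p.1) ∈ CC ∧ f x ≤ (p.2 : EReal)} with hG0
  have hG0cv : Convex ℝ G0 := by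
    rintro ⟨s, r⟩ ⟨x, hx, hxr⟩ ⟨s', r'⟩ ⟨x', hx', hxr'⟩ a b ha hb hab
    refine ⟨a • x + b • x', hCCcv hx hx' ha hb hab, (hf_cvx x x' a b ha hb hab).trans ?_⟩
    have e1 : (a : EReal) * f x ≤ (a : EReal) * (r : EReal) :=
      mul_le_mul_of_nonneg_left hxr (by exact_mod_cast ha)
    have e2 : (b : EReal) * f x' ≤ (b : EReal) * (r' : EReal) :=
      mul_le_mul_of_nonneg_left hxr' (by exact_mod_cast hb)
    have := add_le_add e1 e2
    simpa using this
  have hsucc : ∀ k, (xs (k+1), ss (k+1)) ∈ CC := fun k =>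
    (hCC _ _).2 ⟨hxs k, ys (k+1), hys k, hss k⟩
  have hoptr : ∀ k (x : E) (s : Y) (r : ℝ), (x, s) ∈ CC → f x ≤ (r : EReal) →
      f (xs (k+1)) ≠ ⊤ ∧ (f (xs (k+1))).toReal - ⟪lam k, ss (k+1)⟫ + γ k / 2 * ‖ss (k+1)‖ ^ 2 ≤
        r - ⟪lam k, s⟫ + γ k / 2 * ‖s‖ ^ 2 + ε (k+1) ^ 2 / (2 * γ k) := fun k x s r h hr =>
    aux_ereal (hf_bot _) (hopt k) (iInf₂_le (f := fun (p : E × Y) (_ : p ∈ CC) =>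
      f p.1 - ((⟪lam k, p.2⟫ : ℝ) : EReal) + ((γ k / 2 * ‖p.2‖ ^ 2 : ℝ) : EReal)) (x, s) h) hr
  have hft : ∀ k, f (xs (k+1)) ≠ ⊤ := fun k =>
    (hoptr k x0 _ (f x0).toReal hx0C (EReal.coe_toReal hfx0 (hf_bot _)).ge).1
  have hfc : ∀ k, f (xs (k+1)) = (((f (xs (k+1))).toReal : ℝ) : EReal) := fun k =>
    (EReal.coe_toReal (hft k) (hf_bot _)).symm
  have hconvS : Convex ℝ {sv : Y | ∃ x : E, (x, sv) ∈ CC} := by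
    rintro s ⟨x, hx⟩ s' ⟨x', hx'⟩ a b ha hb hab
    exact ⟨a • x + b • x', hCCcv hx hx' ha hb hab⟩
  have hprojS : ∀ x s, (x, s) ∈ CC → 0 ≤ ⟪sbar, s - sbar⟫ := by
    intro x s hs
    have : 0 ≤ 2 * ⟪sbar, s - sbar⟫ := by
      apply aux_small (B := ‖s - sbar‖ ^ 2)
      intro t ht0 ht1
      have h1 := hsbar_min _ (hconvS.closure hsbar_mem (subset_closure ⟨x, hs⟩)
        (by linarith : 0 ≤ 1 - t) ht0.le (by ring))
      have e : (1 - t) • sbar + t • s = sbar + t • (s - sbar) := by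
        rw [sub_smul, smul_sub, one_smul]; abel
      rw [e] at h1
      have h2 := pow_le_pow_left₀ (norm_nonneg _) h1 2
      rw [norm_add_sq_real, inner_smul_right, norm_smul, Real.norm_of_nonneg ht0.le] at h2
      have h3 : 0 ≤ t * (2 * ⟪sbar, s - sbar⟫ + t * ‖s - sbar‖ ^ 2) := by nlinarith
      exact nonneg_of_mul_nonneg_right h3 ht0
    linarith
  have hclos : ∀ P : Y × ℝ → Prop, IsClosed {p | P p} → (∀ p ∈ G0, P p) → ∀ p ∈ closure G0, P p :=
    fun P hP h p hp => closure_minimal (fun q hq => h q hq) hP hp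
  obtain ⟨M, hM0, hM⟩ := aux_main (closure G0) isClosed_closure hG0cv.closure sbar lbar v0
    (by
      have ht : Tendsto (fun n : ℕ => ((sbar, v0 + 1 / ((n : ℝ) + 1)) : Y × ℝ)) atTop
          (nhds (sbar, v0)) := by
        refine tendsto_const_nhds.prodMk_nhds ?_
        simpa using (tendsto_one_div_add_atTop_nhds_zero_nat (𝕜 := ℝ)).const_add v0
      refine mem_closure_of_tendsto ht (Eventually.of_forall fun n => ?_)
      have hlt : valueFn f CC sbar < ((v0 + 1 / ((n : ℝ) + 1) : ℝ) : EReal) := by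
        rw [hv0, EReal.coe_lt_coe_iff]
        have : 0 < 1 / ((n : ℝ) + 1) := by positivity
        linarith
      simp only [valueFn, iInf_lt_iff] at hlt
      obtain ⟨x, hx, hxl⟩ := hlt
      exact ⟨x, hx, hxl.le⟩)
    (by
      apply hclos
      · exact isClosed_le (by fun_prop) (by fun_prop)
      · rintro ⟨s, r⟩ ⟨x, hx, hxr⟩
        have := ((hlbar s).trans (hval x s hx)).trans hxr
        exact_mod_cast this)
    (by
      apply hclos
      · exact isClosed_le (by fun_prop) (by fun_prop)
      · rintro ⟨s, r⟩ ⟨x, hx, hxr⟩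
        exact hprojS x s hx)
    γ hγ ε hε (fun k => (f (xs k)).toReal) ss lam
    (fun k => subset_closure ⟨xs (k+1), hsucc k, (hfc k).le⟩)
    (by
      intro k
      apply hclos
      · exact isClosed_le (by fun_prop) (by fun_prop)
      · rintro ⟨s, r⟩ ⟨x, hx, hxr⟩
        exact (hoptr k x s r hx hxr).2)
    hlam A1 A2 A3 A5
  have hsqrt : Tendsto (fun k : ℕ => Real.sqrt (∑ i ∈ Finset.range k, γ i)) atTop atTop :=
    Real.tendsto_sqrt_atTop.comp A5
  have hz : ∀ c : ℝ, Tendsto (fun k : ℕ => c / Real.sqrt (∑ i ∈ Finset.range k, γ i)) atTop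
      (nhds 0) := fun c => hsqrt.const_div_atTop c
  have hgapS : ∀ x s, (x, s) ∈ CC → ‖s - sbar‖ ^ 2 ≤ ‖s‖ ^ 2 - ‖sbar‖ ^ 2 := by
    intro x s hs
    have h1 := hprojS x s hs
    rw [norm_sub_sq_real]
    rw [inner_sub_right, real_inner_self_eq_norm_sq, real_inner_comm] at h1
    linarith
  -- all bounds at once, with unshifted index
  have hall : ∀ᶠ k : ℕ in atTop,
      f (xs k) = (((f (xs k)).toReal : ℝ) : EReal) ∧
      |(f (xs k)).toReal - v0| ≤ M / Real.sqrt (∑ i ∈ Finset.range k, γ i) ∧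
      ‖C (xs k) - ys k - sbar‖ ≤ Real.sqrt M / Real.sqrt (∑ i ∈ Finset.range k, γ i) ∧
      ‖ys k - projK (C (xs k))‖ ≤ 2 * Real.sqrt M / Real.sqrt (∑ i ∈ Finset.range k, γ i) := by
    obtain ⟨N, hN⟩ := eventually_atTop.1 hM
    refine eventually_atTop.2 ⟨N + 1, fun n hn => ?_⟩
    obtain ⟨k, rfl⟩ : ∃ k, n = k + 1 := ⟨n - 1, by omega⟩
    obtain ⟨h1, h2⟩ := hN k (by omega)
    have h3 : ‖C (xs (k+1)) - ys (k+1) - sbar‖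
        ≤ Real.sqrt M / Real.sqrt (∑ i ∈ Finset.range (k+1), γ i) := by
      rw [← Real.sqrt_div hM0, ← hss k]
      exact Real.le_sqrt_of_sq_le ((hgapS _ _ (hsucc k)).trans h1)
    refine ⟨hfc k, h2, h3, ?_⟩
    obtain ⟨hp1, hp2⟩ := hprojK (C (xs (k+1)))
    have h4 : ‖C (xs (k+1)) - projK (C (xs (k+1))) - sbar‖
        ≤ Real.sqrt M / Real.sqrt (∑ i ∈ Finset.range (k+1), γ i) := by
      rw [← Real.sqrt_div hM0]
      apply Real.le_sqrt_of_sq_le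
      refine (hgapS (xs (k+1)) _ ((hCC _ _).2 ⟨hxs k, _, hp1, rfl⟩)).trans ?_
      have h5 := pow_le_pow_left₀ (norm_nonneg _) (hp2 _ (hys k)) 2
      rw [← hss k] at h5
      linarith
    have e : ys (k+1) - projK (C (xs (k+1))) = (C (xs (k+1)) - projK (C (xs (k+1))) - sbar)
        - (C (xs (k+1)) - ys (k+1) - sbar) := by abel
    rw [e, mul_div_assoc]
    refine (norm_sub_le _ _).trans ?_
    linarith
  refine ⟨?_, ⟨M, ?_⟩, ?_, ?_, ?_⟩
  · have h1 : Tendsto (fun k => (f (xs k)).toReal) atTop (nhds v0) := by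
      rw [tendsto_iff_norm_sub_tendsto_zero]
      refine squeeze_zero' (Eventually.of_forall fun _ => norm_nonneg _) ?_ (hz M)
      filter_upwards [hall] with k hk using hk.2.1
    have h2 := (continuous_coe_real_ereal.tendsto v0).comp h1
    refine h2.congr' ?_
    filter_upwards [hall] with k hk using hk.1.symm
  · filter_upwards [hall] with k hk
    have h1 := abs_le.1 hk.2.1
    rw [hk.1]
    constructor
    · have : (f (xs k)).toReal ≤ v0 + M / Real.sqrt (∑ i ∈ Finset.range k, γ i) := by linarith
      exact_mod_cast this
    · have : v0 ≤ (f (xs k)).toReal + M / Real.sqrt (∑ i ∈ Finset.range k, γ i) := by linarith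
      exact_mod_cast this
  · rw [tendsto_iff_norm_sub_tendsto_zero]
    refine squeeze_zero' (Eventually.of_forall fun _ => norm_nonneg _) ?_ (hz (Real.sqrt M))
    filter_upwards [hall] with k hk using hk.2.2.1
  · refine IsBigO.of_bound (Real.sqrt M) ?_
    filter_upwards [hall] with k hk
    rw [norm_norm, Real.norm_of_nonneg (by positivity), mul_one_div]
    exact hk.2.2.1
  · refine IsBigO.of_bound (2 * Real.sqrt M) ?_
    filter_upwards [hall] with k hk
    rw [norm_norm, Real.norm_of_nonneg (by positivity), mul_one_div]
    exact hk.2.2.2
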